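/- Let θ : S → R be a ring extension admitting a reflexive homomorphism φ, and assume Ext^k_S(R,S) = 0 for all k ≥ 1 (where R is regarded as a left S-module via θ). Then for every left R-module X and every n ≥ 1 there is an isomorphism of abelian groups Ext^n_R(X,R) ≅ Ext^n_S(X,S), where on the right-hand side X is regarded as a left S-module via restriction of scalars. -/

import Mathlib

/- STATEMENT 14: Let θ : S → R be a ring extension with a reflexive homomorphism φ,
and assume Ext^k_S(R,S) = 0 for all k ≥ 1. Then for every left R-module X and n ≥ 1,
Ext^n_R(X,R) ≅ Ext^n_S(X,S) as abelian groups. -/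

open CategoryTheory

universe u v

/-- `φ : R → S` is a reflexive homomorphism for the ring extension `θ : S →+* R`:
it is additive, `S`-bilinear with respect to `θ`, and the induced maps
`l_φ : R → Hom_S(R,S)`, `w ↦ (r ↦ φ (r * w))`, and `r_φ : R → Hom_{Sᵒᵖ}(R,S)`,
`w ↦ (r ↦ φ (w * r))`, are bijective (bijectivity onto the set of left,
resp. right, `S`-linear maps `R → S` is expressed elementwise). -/
def IsReflexiveHom {S : Type u} {R : Type v} [Ring S] [Ring R] (θ : S →+* R)
    (φ : R → S) : Prop :=
  (∀ a b : R, φ (a + b) = φ a + φ b) ∧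
  (∀ (s : S) (r : R), φ (θ s * r) = s * φ r) ∧
  (∀ (s : S) (r : R), φ (r * θ s) = φ r * s) ∧
  Function.Injective (fun w : R => (fun r : R => φ (r * w))) ∧
  (∀ g : R → S, ((∀ a b : R, g (a + b) = g a + g b) ∧
      ∀ (s : S) (r : R), g (θ s * r) = s * g r) → ∃ w : R, ∀ r, g r = φ (r * w)) ∧
  Function.Injective (fun w : R => (fun r : R => φ (w * r))) ∧
  (∀ g : R → S, ((∀ a b : R, g (a + b) = g a + g b) ∧
      ∀ (s : S) (r : R), g (r * θ s) = g r * s) → ∃ w : R, ∀ r, g r = φ (w * r))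

/-!
`Ext_S^k(-, S)`, `k ≥ 1`, vanishes on `R` by hypothesis, hence on every free `R`-module, because a
class on a coproduct is determined by its restrictions to the summands. The map `l_φ` identifies `R`
with `Hom_S(R, S)`, so that composing with `φ` gives `Hom_R(X, R) ≅ Hom_S(X, S)` for all `X`;
dimension shifting along free covers of `X` propagates this isomorphism to all degrees.
-/

open Limits

section Comparison

universe w v' u'

variable {k : Type*} [Ring k] {C : Type u'} [Category.{v'} C] [Abelian C] [Linear k C]
  [HasExt.{w} C] {X : C} (P : ProjectiveResolution X) {Y : C} {n : ℕ}

lemma smul_extMk (a : k) (f : P.complex.X n ⟶ Y) (m : ℕ) (hm : n + 1 = m)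
    (hf : P.complex.d m n ≫ f = 0) :
    a • P.extMk f m hm hf = P.extMk (a • f) m hm (by simp [hf]) := by
  simp [Abelian.Ext.smul_eq_comp_mk₀, ProjectiveResolution.extMk_comp_mk₀]

variable (Y n)

variable (k) in
/-- The class in `Ext` of a cocycle of `Hom(P, Y)`, where `P` is a projective resolution of `X`, as
a linear map. Only positive degrees are considered, so that there are coboundaries. -/
noncomputable def cocycleToExt :
    LinearMap.ker ((P.complex.linearYonedaObj k Y).sc' n (n + 1) (n + 2)).g.hom →ₗ[k]
      Abelian.Ext.{w} X Y (n + 1) where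
  toFun f := P.extMk (f.1 : P.complex.X (n + 1) ⟶ Y) (n + 2) rfl f.2
  map_add' f g := (P.add_extMk _ _ _ _ f.2 g.2).symm
  map_smul' a f := (smul_extMk P a _ _ _ f.2).symm

lemma cocycleToExt_surjective : Function.Surjective (cocycleToExt.{w} k P Y n) := fun α => by
  obtain ⟨f, hf, rfl⟩ := P.extMk_surjective α (n + 2) rfl
  exact ⟨⟨f, hf⟩, rfl⟩

lemma ker_cocycleToExt :
    LinearMap.ker (cocycleToExt.{w} k P Y n) = LinearMap.range
      ((P.complex.linearYonedaObj k Y).sc' n (n + 1) (n + 2)).moduleCatToCycles := by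
  ext f
  refine (P.extMk_eq_zero_iff (f.1 : P.complex.X (n + 1) ⟶ Y) (n + 2) rfl f.2 n rfl).trans ?_
  exact ⟨fun ⟨g, hg⟩ => ⟨g, Subtype.ext hg⟩, fun ⟨g, hg⟩ => ⟨g, congrArg Subtype.val hg⟩⟩

variable (k X) in
/-- In positive degrees, the derived functors `Ext` of `Hom(-, Y)` agree with `Abelian.Ext`, the
morphisms in the derived category, to which functoriality and long exact sequences apply. -/
noncomputable def extSuccLinearEquiv [EnoughProjectives C] :
    ((Ext k C (n + 1)).obj (.op X)).obj Y ≃ₗ[k] Abelian.Ext.{w} X Y (n + 1) :=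
  let P := projectiveResolution X
  let K := P.complex.linearYonedaObj k Y
  let cohomologyIso : ((Ext k C (n + 1)).obj (.op X)).obj Y ≅
      (K.sc' n (n + 1) (n + 2)).moduleCatLeftHomologyData.H :=
    P.isoExt (n + 1) Y ≪≫
      ShortComplex.homologyMapIso (K.isoSc' n (n + 1) (n + 2) (by simp) (by simp)) ≪≫
      ShortComplex.moduleCatHomologyIso _
  cohomologyIso.toLinearEquiv ≪≫ₗ
    Submodule.quotEquivOfEq _ _ (ker_cocycleToExt P Y n).symm ≪≫ₗ
    (cocycleToExt k P Y n).quotKerEquivOfSurjective (cocycleToExt_surjective P Y n)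

variable (k) in
/-- As `extSuccLinearEquiv`, allowing the first argument to vary within its isomorphism class. -/
noncomputable def extSuccAddEquivOfIso [EnoughProjectives C] {X' : C} (e : X ≅ X') :
    ((Ext k C (n + 1)).obj (.op X')).obj Y ≃+ Abelian.Ext.{w} X Y (n + 1) :=
  ((((Ext k C (n + 1)).mapIso e.op).app Y).toLinearEquiv ≪≫ₗ
    extSuccLinearEquiv k X Y n).toAddEquiv

end Comparison

section Coproduct

universe w v' u'

variable {D : Type u'} [Category.{v'} D] [Abelian D] [HasExt.{w} D] {ι : Type*} {X : ι → D}
  {c : Cofan X}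

lemma exists_forall_mk₀_inj_comp_eq_of_injective (hc : IsColimit c) {I : D} [Injective I]
    {n : ℕ} (z : ∀ i, Abelian.Ext.{w} (X i) I n) :
    ∃ y : Abelian.Ext.{w} c.pt I n,
      ∀ i, (Abelian.Ext.mk₀ (c.inj i)).comp y (zero_add n) = z i := by
  cases n with
  | zero =>
    choose f hf using fun i => (Abelian.Ext.mk₀_bijective _ _).surjective (z i)
    exact ⟨Abelian.Ext.mk₀ (Cofan.IsColimit.desc hc f), fun i => by
      rw [Abelian.Ext.mk₀_comp_mk₀, Cofan.IsColimit.fac, hf]⟩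
  | succ n => exact ⟨0, fun i => by rw [Abelian.Ext.comp_zero, (z i).eq_zero_of_injective]⟩

lemma ext_eq_zero_of_forall_mk₀_inj_comp_eq_zero [EnoughInjectives D] (hc : IsColimit c) {n : ℕ}
    {N : D} (x : Abelian.Ext.{w} c.pt N n)
    (hx : ∀ i, (Abelian.Ext.mk₀ (c.inj i)).comp x (zero_add n) = 0) : x = 0 := by
  induction n generalizing N with
  | zero =>
    obtain ⟨f, rfl⟩ := (Abelian.Ext.mk₀_bijective _ _).surjective x
    simp only [Abelian.Ext.mk₀_comp_mk₀, Abelian.Ext.mk₀_eq_zero_iff] at hx ⊢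
    exact Cofan.IsColimit.hom_ext hc _ _ fun i => by rw [hx, comp_zero]
  | succ n ih =>
    let T := ShortComplex.mk _ _ (cokernel.condition (Injective.ι N))
    have hT : T.ShortExact := { exact := ShortComplex.exact_cokernel _ }
    have : Injective T.X₂ := inferInstanceAs (Injective (Injective.under N))
    obtain ⟨y, rfl⟩ := Abelian.Ext.covariant_sequence_exact₁ _ hT x
      (Abelian.Ext.eq_zero_of_injective _) rfl
    have lift i : ∃ z : Abelian.Ext (X i) T.X₂ n, z.comp (Abelian.Ext.mk₀ T.g) (add_zero n) =
        (Abelian.Ext.mk₀ (c.inj i)).comp y (zero_add n) :=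
      Abelian.Ext.covariant_sequence_exact₃ _ hT _ rfl <| by
        rw [← hx i, Abelian.Ext.comp_assoc _ _ _ _ _ (by lia)]
    choose z hz using lift
    obtain ⟨y', hy'⟩ := exists_forall_mk₀_inj_comp_eq_of_injective hc z
    have y_eq : y = y'.comp (Abelian.Ext.mk₀ T.g) (add_zero n) := by
      refine sub_eq_zero.1 (ih _ fun i => ?_)
      rw [sub_eq_add_neg, Abelian.Ext.comp_add, Abelian.Ext.comp_neg, ← hz, ← hy',
        Abelian.Ext.comp_assoc_of_third_deg_zero, add_neg_cancel]
    rw [y_eq, Abelian.Ext.comp_assoc_of_second_deg_zero, hT.comp_extClass, Abelian.Ext.comp_zero]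

end Coproduct

section ExactFunctor

universe w w' v₁ v₂ u₁ u₂

variable {C : Type u₁} [Category.{v₁} C] [Abelian C] [HasExt.{w} C]
  {D : Type u₂} [Category.{v₂} D] [Abelian D] [HasExt.{w'} D]
  (F : C ⥤ D) [F.Additive] [PreservesFiniteLimits F] [PreservesFiniteColimits F]
  {M : C} {N : D} (ε : F.obj M ⟶ N)

/-- The map `e ↦ F(e) ≫ ε` from `Ext^n(X, M)` to `Ext^n(F X, N)`. -/
noncomputable def mapExtPostcomp (X : C) (n : ℕ) :
    Abelian.Ext.{w} X M n →+ Abelian.Ext.{w'} (F.obj X) N n :=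
  ((Abelian.Ext.mk₀ ε).postcomp (F.obj X) (add_zero n)).comp (F.mapExtAddHom X M n)

lemma mapExtPostcomp_mk₀ {X : C} (f : X ⟶ M) :
    mapExtPostcomp.{w, w'} F ε X 0 (Abelian.Ext.mk₀ f) = Abelian.Ext.mk₀ (F.map f ≫ ε) := by
  simp [mapExtPostcomp, Abelian.Ext.mapExactFunctor_mk₀]

lemma mapExtPostcomp_comp {X Y : C} {a b n : ℕ} (x : Abelian.Ext.{w} X Y a)
    (y : Abelian.Ext.{w} Y M b) (h : a + b = n) :
    mapExtPostcomp.{w, w'} F ε X n (x.comp y h) =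
      (x.mapExactFunctor F).comp (mapExtPostcomp F ε Y b y) h := by
  simp [mapExtPostcomp, Abelian.Ext.mapExactFunctor_comp,
    Abelian.Ext.comp_assoc_of_third_deg_zero]

variable {F ε}

lemma mapExtPostcomp_zero_bijective {X : C}
    (h : Function.Bijective fun f : X ⟶ M => F.map f ≫ ε) :
    Function.Bijective (mapExtPostcomp.{w, w'} F ε X 0) := by
  refine (Function.Bijective.of_comp_iff _ (Abelian.Ext.mk₀_bijective X M)).1 ?_
  convert (Abelian.Ext.mk₀_bijective (F.obj X) N).comp h using 1
  exact funext (mapExtPostcomp_mk₀ F ε)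

lemma mapExtPostcomp_bijective (hε : ∀ X : C, Function.Bijective fun f : X ⟶ M => F.map f ≫ ε)
    (cover : ∀ X : C, ∃ (P : C) (π : P ⟶ X), Epi π ∧
      ∀ k, Subsingleton (Abelian.Ext.{w} P M (k + 1)) ∧
        Subsingleton (Abelian.Ext.{w'} (F.obj P) N (k + 1)))
    (X : C) (n : ℕ) : Function.Bijective (mapExtPostcomp.{w, w'} F ε X n) := by
  induction n generalizing X with
  | zero => exact mapExtPostcomp_zero_bijective (hε X)
  | succ n ih =>
    obtain ⟨P, π, _, hP⟩ := cover X
    obtain ⟨_, hFP⟩ := hP n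
    let T := ShortComplex.mk _ _ (kernel.condition π)
    have hT : T.ShortExact := { exact := ShortComplex.exact_kernel π }
    have hFT := hT.map_of_exact F
    have comm_precomp (x : Abelian.Ext P M n) :
        (Abelian.Ext.mk₀ (F.map T.f)).comp (mapExtPostcomp F ε P n x) (zero_add n) =
          mapExtPostcomp F ε T.X₁ n ((Abelian.Ext.mk₀ T.f).comp x (zero_add n)) := by
      rw [mapExtPostcomp_comp, Abelian.Ext.mapExactFunctor_mk₀]
    have comm_extClass (x : Abelian.Ext T.X₁ M n) :
        hFT.extClass.comp (mapExtPostcomp F ε T.X₁ n x) (add_comm 1 n) =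
          mapExtPostcomp F ε X (n + 1) (hT.extClass.comp x (add_comm 1 n)) := by
      rw [mapExtPostcomp_comp, Abelian.Ext.mapExactFunctor_extClass F hT]
      rfl
    exact AddMonoidHom.bijective_of_surjective_of_bijective_of_right_exact
      ((Abelian.Ext.mk₀ T.f).precomp M (zero_add n))
      (hT.extClass.precomp M (add_comm 1 n))
      ((Abelian.Ext.mk₀ (F.map T.f)).precomp N (zero_add n))
      (hFT.extClass.precomp N (add_comm 1 n))
      (mapExtPostcomp F ε P n) (mapExtPostcomp F ε T.X₁ n) (mapExtPostcomp F ε X (n + 1))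
      (AddMonoidHom.ext comm_precomp) (AddMonoidHom.ext comm_extClass)
      ((ShortComplex.ab_exact_iff_function_exact _).1
        (Abelian.Ext.contravariant_sequence_exact₁' hT M n (n + 1) (add_comm 1 n)))
      ((ShortComplex.ab_exact_iff_function_exact _).1
        (Abelian.Ext.contravariant_sequence_exact₁' hFT N n (n + 1) (add_comm 1 n)))
      (ih P).surjective (ih T.X₁)
      (fun x => Abelian.Ext.contravariant_sequence_exact₃ hT _ x (by subsingleton) (add_comm 1 n))
      (fun y => Abelian.Ext.contravariant_sequence_exact₃ hFT _ y (hFP.elim _ _) (add_comm 1 n))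

end ExactFunctor

section Separator

universe w w' v₁ v₂ u₁ u₂

variable {C : Type u₁} [Category.{v₁} C] [Abelian C] [HasExt.{w} C] [HasCoproducts.{v₁} C]
  {D : Type u₂} [Category.{v₂} D] [Abelian D] [HasExt.{w'} D] [EnoughInjectives D]
  {F : C ⥤ D} [F.Additive] [PreservesFiniteLimits F] [PreservesFiniteColimits F]
  [∀ J : Type v₁, PreservesColimitsOfShape (Discrete J) F]
  {M : C} {N : D} {ε : F.obj M ⟶ N}

lemma mapExtPostcomp_bijective_of_isSeparator
    (hε : ∀ X : C, Function.Bijective fun f : X ⟶ M => F.map f ≫ ε)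
    {G : C} [Projective G] (hG : IsSeparator G)
    (hGN : ∀ k, Subsingleton (Abelian.Ext.{w'} (F.obj G) N (k + 1))) (X : C) (n : ℕ) :
    Function.Bijective (mapExtPostcomp.{w, w'} F ε X n) := by
  refine mapExtPostcomp_bijective hε (fun A => ?_) X n
  refine ⟨∐ fun _ : G ⟶ A => G, Sigma.desc fun f => f, (isSeparator_iff_epi G).1 hG A, fun k => ?_⟩
  refine ⟨Abelian.Ext.subsingleton_of_projective _ _ _, subsingleton_of_forall_eq 0 fun x => ?_⟩
  exact ext_eq_zero_of_forall_mk₀_inj_comp_eq_zero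
    (isColimitCofanMkObjOfIsColimit F _ _ (coproductIsCoproduct fun _ : G ⟶ A => G)) x
    fun _ => (hGN k).elim _ _

end Separator

section Coextension

open ModuleCat

variable {S : Type v} {R : Type u} [Ring S] [Ring R] {θ : S →+* R}

/-- `φ : M → N` exhibits the `R`-module `M` as the coextension of scalars `Hom_S(R, N)` of the
`S`-module `N`, with `φ` playing the role of evaluation at `1`. As in `IsReflexiveHom`, bijectivity
of `m ↦ (r ↦ φ (r • m))` onto the `S`-linear maps `R → N` is expressed elementwise. -/
structure IsCoextension {M N : Type*} [AddCommGroup M] [Module R M] [AddCommGroup N] [Module S N]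
    (θ : S →+* R) (φ : M →+ N) : Prop where
  map_smul (s : S) (m : M) : φ (θ s • m) = s • φ m
  injective : Function.Injective fun (m : M) (r : R) => φ (r • m)
  exists_eq (g : R →+ N) (hg : ∀ s r, g (θ s * r) = s • g r) : ∃ m, ∀ r, g r = φ (r • m)

lemma IsReflexiveHom.isCoextension {φ : R → S} (hφ : IsReflexiveHom θ φ) :
    IsCoextension θ (AddMonoidHom.mk' φ hφ.1) :=
  have ⟨_, map_mul, _, injective, exists_eq, _⟩ := hφ
  ⟨map_mul, injective, fun g hg => exists_eq g ⟨map_add g, hg⟩⟩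

lemma IsCoextension.exists_linearMap_eq {M N X : Type*} [AddCommGroup M] [Module R M]
    [AddCommGroup N] [Module S N] [AddCommGroup X] [Module R X] {φ : M →+ N}
    (hφ : IsCoextension θ φ) (g : X →+ N) (hg : ∀ (s : S) x, g (θ s • x) = s • g x) :
    ∃ f : X →ₗ[R] M, ∀ x, φ (f x) = g x := by
  have hgx (x : X) := hφ.exists_eq (g.comp (AddMonoidHom.flip (smulAddHom R X) x))
    fun s r => by simp [mul_smul, hg]
  choose f hf using hgx
  simp only [AddMonoidHom.comp_apply, AddMonoidHom.flip_apply, smulAddHom_apply] at hf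
  refine ⟨
    { toFun := f
      map_add' := fun x y => hφ.injective (funext fun r => ?_)
      map_smul' := fun a x => hφ.injective (funext fun r => ?_) }, fun x => ?_⟩
  · simp only [smul_add, map_add, ← hf]
  · simp only [RingHom.id_apply, smul_smul, ← hf]
  · simpa using (hf x 1).symm

namespace IsCoextension

variable {M N : Type u} [AddCommGroup M] [Module R M] [AddCommGroup N] [Module S N] {φ : M →+ N}

/-- `φ` as a morphism of `S`-modules. -/
noncomputable def hom (hφ : IsCoextension θ φ) : (restrictScalars θ).obj (of R M) ⟶ of S N :=
  ofHom (X := (restrictScalars θ).obj (of R M)) { φ with map_smul' := hφ.map_smul }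

lemma map_comp_hom_bijective (hφ : IsCoextension θ φ) (X : ModuleCat.{u} R) :
    Function.Bijective fun f : X ⟶ of R M => (restrictScalars θ).map f ≫ hφ.hom := by
  constructor
  · intro f f' h
    ext x
    refine hφ.injective (funext fun r => ?_)
    have apply_smul : φ (f (r • x)) = φ (f' (r • x)) := ConcreteCategory.congr_hom h (r • x : X)
    simpa using apply_smul
  · intro g
    obtain ⟨f, hf⟩ := hφ.exists_linearMap_eq (X := X) g.hom.toAddMonoidHom g.hom.map_smul
    exact ⟨ofHom f, ModuleCat.hom_ext (LinearMap.ext hf)⟩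

end IsCoextension

lemma isSeparator_of_self (R : Type u) [Ring R] : IsSeparator (of R R) :=
  (isSeparator_def _).2 fun X Y f g h => by
    ext x
    simpa using ConcreteCategory.congr_hom (h (ofHom (LinearMap.toSpanSingleton R X x))) (1 : R)

instance : PreservesFiniteLimits (restrictScalars.{u} θ) := ⟨fun _ _ _ => ⟨inferInstance⟩⟩

variable (θ) in
/-- Scalars restricted along `θ` agree with any given `S`-module structure induced by `θ`. -/
noncomputable def restrictScalarsObjIso (X : Type u) [AddCommGroup X] [Module R X] [Module S X]
    (hX : ∀ (s : S) (x : X), s • x = θ s • x) :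
    (restrictScalars θ).obj (of R X) ≅ of S X :=
  letI e : (restrictScalars θ).obj (of R X) ≃ₗ[S] X :=
    { AddEquiv.refl X with map_smul' := fun s x => (hX s x).symm }
  e.toModuleIso

theorem ext_iso_left_general [Small.{u} S] {M N : Type u} [AddCommGroup M] [Module R M]
    [AddCommGroup N] [Module S N] {φ : M →+ N} (hφ : IsCoextension θ φ)
    [Module S R] (hR : ∀ (s : S) (r : R), s • r = θ s * r)
    (hvanish : ∀ k : ℕ, 1 ≤ k →
      Subsingleton (((Ext ℤ (ModuleCat.{u} S) k).obj (.op (of S R))).obj (of S N)))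
    (X : Type u) [AddCommGroup X] [Module R X]
    [Module S X] (hX : ∀ (s : S) (x : X), s • x = θ s • x) (n : ℕ) (hn : 1 ≤ n) :
    Nonempty
      (((Ext ℤ (ModuleCat.{u} R) n).obj (.op (of R X))).obj (of R M) ≃+
       ((Ext ℤ (ModuleCat.{u} S) n).obj (.op (of S X))).obj (of S N)) := by
  obtain ⟨n, rfl⟩ := Nat.exists_eq_add_of_le' hn
  have hRN (k : ℕ) :
      Subsingleton (Abelian.Ext ((restrictScalars.{u} θ).obj (of R R)) (of S N) (k + 1)) :=
    have := hvanish (k + 1) (by lia)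
    (extSuccAddEquivOfIso ℤ (of S N) k (restrictScalarsObjIso θ R hR)).symm.subsingleton
  have bijective := mapExtPostcomp_bijective_of_isSeparator hφ.map_comp_hom_bijective
    (isSeparator_of_self R) hRN (of R X) (n + 1)
  let eR := extSuccAddEquivOfIso ℤ (of R M) n (Iso.refl (of R X))
  let eS := extSuccAddEquivOfIso ℤ (of S N) n (restrictScalarsObjIso θ X hX)
  exact ⟨eR.trans ((AddEquiv.ofBijective _ bijective).trans eS.symm)⟩

end Coextension

theorem ext_iso_left {S R : Type u} [Ring S] [Ring R] (θ : S →+* R)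
    (φ : R → S) (hφ : IsReflexiveHom θ φ)
    [Module S R] (hR : ∀ (s : S) (r : R), s • r = θ s * r)
    (hvanish : ∀ k : ℕ, 1 ≤ k → Subsingleton
      (((Ext ℤ (ModuleCat.{u} S) k).obj
        (Opposite.op (ModuleCat.of S R))).obj (ModuleCat.of S S)))
    (X : Type u) [AddCommGroup X] [Module R X]
    [Module S X] (hX : ∀ (s : S) (x : X), s • x = θ s • x) :
    ∀ n : ℕ, 1 ≤ n → Nonempty
      ((((Ext ℤ (ModuleCat.{u} R) n).obj
          (Opposite.op (ModuleCat.of R X))).obj (ModuleCat.of R R)) ≃+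
       (((Ext ℤ (ModuleCat.{u} S) n).obj
          (Opposite.op (ModuleCat.of S X))).obj (ModuleCat.of S S))) :=
  ext_iso_left_general hφ.isCoextension hR hvanish X hX
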